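/- arXiv:1707.06047 — 2 statements merged into one kernel-verified Lean document; each statement's English description precedes it below -/
import Mathlib

section
/- Suppose n ≥ 1 and f = (f_1,…,f_{2n+1}) is a well-conditioned (2n+1)-tuple of polynomials with integer coefficients. Then there exists a nonzero polynomial Ψ ∈ ℤ[w_1,…,w_{2n+1}] such that Ψ(σ_{1,n}(z;h),…,σ_{2n+1,n}(z;h)) = 0 identically as a polynomial in z_1,…,z_n,h_1,…,h_n, and yet Ψ(σ_{1,n+1}(z;h),…,σ_{2n+1,n+1}(z;h)) is not the zero polynomial in z_1,…,z_{n+1},h_1,…,h_{n+1}. -/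
open Finset

/-- A `t`-tuple `f = (f_1, …, f_t)` of nonzero integer polynomials is *well-conditioned*
if their degrees satisfy `0 ≤ k_t < k_{t-1} < ⋯ < k_1` and there is no positive integer
`z` with `f_1(z) = ⋯ = f_t(z) = 0`. -/
def WellConditioned {t : ℕ} (f : Fin t → Polynomial ℤ) : Prop :=
  (∀ j, f j ≠ 0) ∧
  (∀ i j : Fin t, i < j → (f j).natDegree < (f i).natDegree) ∧
  (∀ z : ℤ, 0 < z → ∃ j, (f j).eval z ≠ 0)

/-- `sigmaPoly f n j` is the polynomial `σ_{j,n}(z;h) = h_1 f_j(z_1) + ⋯ + h_n f_j(z_n)`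
in the variables `z_1, …, z_n` (encoded as `Sum.inl`) and `h_1, …, h_n` (encoded as
`Sum.inr`). -/
noncomputable def sigmaPoly {t : ℕ} (f : Fin t → Polynomial ℤ) (n : ℕ) (j : Fin t) :
    MvPolynomial (Fin n ⊕ Fin n) ℤ :=
  ∑ i : Fin n,
    MvPolynomial.X (Sum.inr i) * Polynomial.aeval (MvPolynomial.X (Sum.inl i)) (f j)

/-!
Let `I_m` be the ideal of polynomials vanishing on all linear combinations of `m` points of the
curve `z ↦ (f_1(z), …, f_t(z))`. Translating by multiples of curve points shows that
`I_n ≤ I_{n+1}` would force `I_{n+1} ≤ I_{n+2}` and so on, so that all of `I_n` would vanish on the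
span of the curve. When the `f_j` are linearly independent this span has full rank, whence
`I_n = 0`. But `I_n ≠ 0` if `t > 2n`, because `t` polynomials in `2n` variables are algebraically
dependent.
-/

section LinearIndependence

variable {R ι : Type*} [CommRing R] [IsDomain R]

theorem linearIndependent_of_natDegree_injective {p : ι → Polynomial R} (hp : ∀ i, p i ≠ 0)
    (hdeg : Function.Injective fun i => (p i).natDegree) : LinearIndependent R p := by
  rw [linearIndependent_iff']
  intro s c hsum i hi
  by_contra hci
  have degree_smul (j : ι) (hj : c j • p j ≠ 0) : (c j • p j).degree = (p j).natDegree := by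
    rw [Polynomial.smul_eq_C_mul, Polynomial.degree_C_mul (left_ne_zero_of_smul hj),
      Polynomial.degree_eq_natDegree (hp j)]
  have degree_sum := Polynomial.degree_sum_eq_of_disjoint (fun j => c j • p j) s <| by
    rintro j ⟨-, hj⟩ k ⟨-, hk⟩ hjk heq
    simp only [Function.comp_apply, degree_smul j hj, degree_smul k hk, Nat.cast_inj] at heq
    exact hjk (hdeg heq)
  rw [hsum, Polynomial.degree_zero, eq_comm, Finset.sup_eq_bot_iff] at degree_sum
  exact smul_ne_zero hci (hp i) (Polynomial.degree_eq_bot.1 (degree_sum i hi))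

theorem WellConditioned.linearIndependent {t : ℕ} {f : Fin t → Polynomial ℤ}
    (hf : WellConditioned f) : LinearIndependent ℤ f :=
  have natDegree_strictAnti : StrictAnti fun j => (f j).natDegree := fun i j => hf.2.1 i j
  linearIndependent_of_natDegree_injective hf.1 natDegree_strictAnti.injective

theorem linearIndependent_eval [Infinite R] {f : ι → Polynomial R} (hf : LinearIndependent R f) :
    LinearIndependent R fun i (a : R) => (f i).eval a :=
  hf.map_injOn (LinearMap.pi Polynomial.leval) fun _ _ _ _ h => Polynomial.funext (congrFun h)

theorem exists_smul_mem_span_range_flip {α : Type*} [Finite ι] {g : ι → α → R}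
    (hg : LinearIndependent R g) (x : ι → R) :
    ∃ d : R, d ≠ 0 ∧ d • x ∈ Submodule.span R (Set.range (flip g)) := by
  let K := FractionRing R
  let toFrac := (Algebra.linearMap R K).compLeft ι
  have toFrac_injective : Function.Injective toFrac := (IsFractionRing.injective R K).comp_left
  have linearIndependent_frac : LinearIndependent K fun i => algebraMap R K ∘ g i :=
    (LinearIndependent.iff_fractionRing R K).1 <|
      hg.map_injOn ((Algebra.linearMap R K).compLeft α)
        (IsFractionRing.injective R K).comp_left.injOn
  have hx : toFrac x ∈ Submodule.span K (Set.range fun a => toFrac (flip g a)) :=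
    span_flip_eq_top_iff_linearIndependent.2 linearIndependent_frac ▸ Submodule.mem_top
  obtain ⟨_, hy, d, hxy⟩ := (IsLocalization.mem_span_iff (nonZeroDivisors R)).1 hx
  rw [Set.range_comp', ← Submodule.map_span] at hy
  obtain ⟨y, hy, rfl⟩ := hy
  have hdx : (d : R) • x = y := toFrac_injective <| by
    rw [map_smul, hxy, ← algebraMap_smul K, smul_smul, mul_comm, IsLocalization.mk'_spec, map_one,
      one_smul]
  exact ⟨d, nonZeroDivisors.coe_ne_zero d, hdx ▸ hy⟩

end LinearIndependence

section PolynomialRelations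

open MvPolynomial

variable {R ι : Type*} [CommRing R] [IsDomain R]

theorem eq_zero_of_eval_eq_zero_on_submodule [Infinite R] [Finite ι] {L : Submodule R (ι → R)}
    (hL : ∀ x : ι → R, ∃ d : R, d ≠ 0 ∧ d • x ∈ L) {P : MvPolynomial ι R}
    (hP : ∀ x ∈ L, eval x P = 0) : P = 0 := by
  classical
  cases nonempty_fintype ι
  choose d hd hdL using fun i => hL (Pi.single i 1)
  refine funext_set (fun i => Set.range (d i * ·))
    (fun i => Set.infinite_range_of_injective (mul_right_injective₀ (hd i))) fun x hx => ?_
  choose y hy using fun i => hx i trivial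
  have hxL : x = ∑ i, y i • d i • Pi.single i 1 := by
    simpa only [← hy, smul_smul, mul_comm (y _)] using pi_eq_sum_univ' x
  rw [map_zero, hP x (hxL ▸ L.sum_smul_mem _ fun i _ => hdL i)]

theorem exists_ne_zero_aeval_eq_zero_of_card_lt {σ : Type*} [Fintype σ] [Fintype ι]
    (hcard : Fintype.card σ < Fintype.card ι) (x : ι → MvPolynomial σ R) :
    ∃ P : MvPolynomial ι R, P ≠ 0 ∧ aeval x P = 0 := by
  by_contra! hx
  have hind : AlgebraicIndependent R x :=
    algebraicIndependent_iff.2 fun P hP => not_imp_not.1 (hx P) hP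
  have card_le := hind.lift_cardinalMk_le_trdeg
  simp only [trdeg_of_isDomain, Cardinal.mk_fintype, Cardinal.lift_natCast, Nat.cast_le] at card_le
  exact hcard.not_ge card_le

end PolynomialRelations

section Secant

open MvPolynomial

variable {R ι : Type*} [CommRing R]

/-- The linear combination, with coefficients `h i`, of the points with parameters `z i` on the
curve parametrised by `f`. Coordinates lie in any `R`-algebra, so that both the generic point
`(σ_{1,n}, …, σ_{t,n})` and its specialisations are instances. -/
noncomputable def secantPoint {A κ : Type*} [CommRing A] [Algebra R A] [Fintype κ]
    (f : ι → Polynomial R) (z h : κ → A) : ι → A :=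
  fun j => ∑ i, h i * Polynomial.aeval (z i) (f j)

/-- The generic `n`-secant point: the tuple `(σ_{1,n}, …, σ_{t,n})`, with the parameters `z_i`
encoded as `Sum.inl` and the coefficients `h_i` as `Sum.inr`. Over `ℤ` it is definitionally
equal to `sigmaPoly f n`. -/
noncomputable def genericSecantPoint (f : ι → Polynomial R) (n : ℕ) :
    ι → MvPolynomial (Fin n ⊕ Fin n) R :=
  secantPoint f (fun i => X (Sum.inl i)) (fun i => X (Sum.inr i))

/-- The ideal of algebraic relations between the `σ_{j,n}`, which over an infinite domain is the
vanishing ideal of the set of all `n`-secant points. -/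
noncomputable def secantIdeal (f : ι → Polynomial R) (n : ℕ) : Ideal (MvPolynomial ι R) :=
  RingHom.ker (aeval (R := R) (genericSecantPoint f n))

theorem map_secantPoint {A B κ : Type*} [CommRing A] [Algebra R A] [CommRing B] [Algebra R B]
    [Fintype κ] (φ : A →ₐ[R] B) (f : ι → Polynomial R) (z h : κ → A) (j : ι) :
    φ (secantPoint f z h j) = secantPoint f (φ ∘ z) (φ ∘ h) j := by
  simp only [secantPoint, map_sum, map_mul, Function.comp_apply, Polynomial.aeval_algHom_apply]

theorem secantPoint_snoc {A : Type*} [CommRing A] [Algebra R A] (f : ι → Polynomial R) {n : ℕ}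
    (z h : Fin n → A) (a b : A) :
    secantPoint f (Fin.snoc z a : Fin (n + 1) → A) (Fin.snoc h b : Fin (n + 1) → A) =
      secantPoint f z h + fun j => b * Polynomial.aeval a (f j) := by
  funext j
  simp only [secantPoint, Fin.sum_univ_castSucc, Fin.snoc_castSucc, Fin.snoc_last, Pi.add_apply]

theorem exists_secantPoint_eq_of_mem_span {A : Type*} [CommRing A] [Algebra R A]
    {f : ι → Polynomial R} {x : ι → A}
    (hx : x ∈ Submodule.span A (Set.range fun a j => Polynomial.aeval a (f j))) :
    ∃ (n : ℕ) (z h : Fin n → A), secantPoint f z h = x := by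
  obtain ⟨n, h, v, rfl⟩ := Submodule.mem_span_set'.1 hx
  choose z hz using fun i => (v i).2
  refine ⟨n, z, h, funext fun j => ?_⟩
  simp only [secantPoint, ← hz, Finset.sum_apply, Pi.smul_apply, smul_eq_mul]

theorem secantIdeal_ne_bot [IsDomain R] [Fintype ι] (f : ι → Polynomial R) {n : ℕ}
    (hn : 2 * n < Fintype.card ι) : secantIdeal f n ≠ ⊥ := by
  obtain ⟨P, hP0, hP⟩ := exists_ne_zero_aeval_eq_zero_of_card_lt
    (by simpa [two_mul] using hn) (genericSecantPoint f n)
  exact (Submodule.ne_bot_iff _).2 ⟨P, hP, hP0⟩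

variable [IsDomain R] [Infinite R] {f : ι → Polynomial R}

theorem mem_secantIdeal_iff {n : ℕ} {P : MvPolynomial ι R} :
    P ∈ secantIdeal f n ↔ ∀ z h : Fin n → R, eval (secantPoint f z h) P = 0 := by
  have eval_generic (x : Fin n ⊕ Fin n → R) : eval x (aeval (genericSecantPoint f n) P) =
      eval (secantPoint f (x ∘ Sum.inl) (x ∘ Sum.inr)) P := by
    simp only [← aeval_eq_eval, comp_aeval_apply, genericSecantPoint, map_secantPoint,
      Function.comp_def, aeval_X]
  rw [secantIdeal, RingHom.mem_ker, MvPolynomial.funext_iff]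
  simp only [eval_generic, map_zero]
  exact ⟨fun hP z h => hP (Sum.elim z h), fun hP x => hP _ _⟩

theorem mem_secantIdeal_succ_iff {n : ℕ} {P : MvPolynomial ι R} :
    P ∈ secantIdeal f (n + 1) ↔
      ∀ a b : R, bind₁ (fun j => X j + C (b * (f j).eval a)) P ∈ secantIdeal f n := by
  have eval_translate (v w : ι → R) :
      eval w (bind₁ (fun j => X j + C (v j)) P) = eval (w + v) P := by
    simp [← aeval_eq_eval, aeval_bind₁, Pi.add_def]
  simp only [mem_secantIdeal_iff, eval_translate, ← Polynomial.coe_aeval_eq_eval,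
    ← secantPoint_snoc]
  refine ⟨fun hP a b z h => hP _ _, fun hP z h => ?_⟩
  simpa only [Fin.snoc_init_self] using
    hP (z (Fin.last n)) (h (Fin.last n)) (Fin.init z) (Fin.init h)

theorem secantIdeal_antitone : Antitone (secantIdeal f) :=
  antitone_nat_of_succ_le fun n P hP => by
    simpa [bind₁_X_left] using mem_secantIdeal_succ_iff.1 hP 0 0

theorem secantIdeal_le_of_le_succ {n : ℕ} (hn : secantIdeal f n ≤ secantIdeal f (n + 1)) (m : ℕ) :
    secantIdeal f n ≤ secantIdeal f m := by
  have step (k : ℕ) (hnk : n ≤ k) : secantIdeal f k ≤ secantIdeal f (k + 1) := by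
    induction k, hnk using Nat.le_induction with
    | base => exact hn
    | succ k _ ih =>
      intro P hP
      rw [mem_secantIdeal_succ_iff] at hP ⊢
      exact fun a b => ih (hP a b)
  rcases le_total m n with hmn | hnm
  · exact secantIdeal_antitone hmn
  · induction m, hnm using Nat.le_induction with
    | base => exact le_rfl
    | succ k hnk ih => exact ih.trans (step k hnk)

theorem secantIdeal_eq_bot_of_le_succ [Finite ι] (hf : LinearIndependent R f) {n : ℕ}
    (hn : secantIdeal f n ≤ secantIdeal f (n + 1)) : secantIdeal f n = ⊥ := by
  refine (Submodule.eq_bot_iff _).2 fun P hP => ?_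
  refine eq_zero_of_eval_eq_zero_on_submodule
    (exists_smul_mem_span_range_flip (linearIndependent_eval hf)) fun x hx => ?_
  obtain ⟨m, z, h, rfl⟩ := exists_secantPoint_eq_of_mem_span hx
  exact mem_secantIdeal_iff.1 (secantIdeal_le_of_le_succ hn m hP) z h

theorem exists_polynomial_identity_general [Fintype ι] {n : ℕ} (hn : 2 * n < Fintype.card ι)
    (hf : LinearIndependent R f) :
    ∃ Ψ : MvPolynomial ι R, Ψ ≠ 0 ∧
      aeval (genericSecantPoint f n) Ψ = 0 ∧ aeval (genericSecantPoint f (n + 1)) Ψ ≠ 0 := by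
  have not_le : ¬ secantIdeal f n ≤ secantIdeal f (n + 1) := fun hle =>
    secantIdeal_ne_bot f hn (secantIdeal_eq_bot_of_le_succ hf hle)
  obtain ⟨Ψ, hΨ, hΨ'⟩ := SetLike.not_le_iff_exists.1 not_le
  exact ⟨Ψ, fun h => hΨ' (h ▸ zero_mem _), hΨ, hΨ'⟩

end Secant

theorem exists_polynomial_identity
    (n : ℕ) (hn : 1 ≤ n) (f : Fin (2 * n + 1) → Polynomial ℤ)
    (hf : WellConditioned f) :
    ∃ Ψ : MvPolynomial (Fin (2 * n + 1)) ℤ, Ψ ≠ 0 ∧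
      MvPolynomial.aeval (fun j => sigmaPoly f n j) Ψ = 0 ∧
      MvPolynomial.aeval (fun j => sigmaPoly f (n + 1) j) Ψ ≠ 0 :=
  exists_polynomial_identity_general (by simp) hf.linearIndependent
end

section
/- Let s, k, r be positive integers with r < k. Define the exponential sums h_k(α;X) = ∑_{1≤x≤X} e(α_1 x + ⋯ + α_k x^k) and g_r(α;X) = ∑_{|h|≤sX^r} ∑_{1≤z≤X} e(binom(r,r)·h·α_r + binom(r+1,r)·h·z·α_{r+1} + ⋯ + binom(k,r)·h·z^{k−r}·α_k), where e(θ) = e^{2πiθ}. Then there is a constant C depending at most on s, k and r such that for all sufficiently large real X, I_{s,k,r}(X) ≤ C·X^{−1}·∫_{[0,1)^k} |h_k(α;2X)|^{2s}·g_r(−α;X) dα. -/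
open Finset MeasureTheory

/-- `e(θ) = exp(2πiθ)`. -/
noncomputable def eTheta (θ : ℝ) : ℂ := Complex.exp (2 * Real.pi * Complex.I * θ)

/-- The exponential sum `h_k(α; Y) = ∑_{1 ≤ x ≤ Y} e(α_1 x + ⋯ + α_k x^k)`, where
`α_j` is encoded as `α ⟨j-1, _⟩` for `1 ≤ j ≤ k`. -/
noncomputable def weylSum (k : ℕ) (α : Fin k → ℝ) (Y : ℝ) : ℂ :=
  ∑ x ∈ Finset.Icc (1 : ℤ) ⌊Y⌋, eTheta (∑ j : Fin k, α j * (x : ℝ) ^ ((j : ℕ) + 1))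

/-- The exponential sum
`g_r(α; X) = ∑_{|h| ≤ sX^r} ∑_{1 ≤ z ≤ X} e(∑_{r ≤ j ≤ k} C(j,r) h z^{j-r} α_j)`,
where `α_j` is encoded as `α ⟨j-1, _⟩` for `1 ≤ j ≤ k`; the terms with `j < r` carry
the coefficient `ω_j = 0`. -/
noncomputable def gSum (s k r : ℕ) (α : Fin k → ℝ) (X : ℝ) : ℂ :=
  ∑ h ∈ Finset.Icc (-⌊(s : ℝ) * X ^ r⌋) ⌊(s : ℝ) * X ^ r⌋,
    ∑ z ∈ Finset.Icc (1 : ℤ) ⌊X⌋,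
      eTheta (∑ j : Fin k,
        (if r ≤ (j : ℕ) + 1 then (((j : ℕ) + 1).choose r : ℝ) else 0) *
          (h : ℝ) * (z : ℝ) ^ ((j : ℕ) + 1 - r) * α j)

/-- `vinogradovSliceCount s k r X` is the number of integral solutions of the system
`x_1^j + ⋯ + x_s^j = y_1^j + ⋯ + y_s^j` for `1 ≤ j ≤ k`, `j ≠ r`, with `1 ≤ x_i, y_i ≤ X`. -/
noncomputable def vinogradovSliceCount (s k r : ℕ) (X : ℝ) : ℕ :=
  {p : (Fin s → ℤ) × (Fin s → ℤ) |
      (∀ i, 1 ≤ p.1 i ∧ (p.1 i : ℝ) ≤ X) ∧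
      (∀ i, 1 ≤ p.2 i ∧ (p.2 i : ℝ) ≤ X) ∧
      ∀ j ∈ Finset.Icc 1 k, j ≠ r →
        ∑ i, (p.1 i) ^ j = ∑ i, (p.2 i) ^ j}.ncard

/-!
Translating a solution `(x, y)` of the system lacking its `r`-th equation by `z` gives
`∑ (xᵢ + z)^j - ∑ (yᵢ + z)^j = C(j, r) h z^(j - r)` for `1 ≤ j ≤ k`, by the binomial theorem, where
`h = ∑ xᵢ^r - ∑ yᵢ^r` is the defect in the missing equation, of size at most `s X^r`. By
orthogonality of characters the integral counts the solutions of this larger system. Each of the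
`I_{s,k,r}(X)` original solutions produces one of them for every integer `1 ≤ z ≤ X`, all distinct,
so `I_{s,k,r}(X) ⌊X⌋` is at most the integral.
-/

section TrigonometricSums

open UnitAddTorus ComplexConjugate

variable {d τ : Type*}

/-- The class of `α` in the torus `(ℝ/ℤ)^d`; characters of the torus are Mathlib's
`UnitAddTorus.mFourier`. -/
def torusPoint (α : d → ℝ) : UnitAddTorus d := fun j ↦ α j

lemma continuous_torusPoint : Continuous (torusPoint (d := d)) := by
  unfold torusPoint
  exact continuous_pi fun j ↦ (AddCircle.continuous_mk' 1).comp (continuous_apply j)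

variable [Fintype d]

lemma eTheta_sum_mul_intCast (t : d → ℤ) (α : d → ℝ) :
    eTheta (∑ j, α j * t j) = mFourier t (torusPoint α) := by
  simp only [eTheta, mFourier, torusPoint, ContinuousMap.coe_mk, fourier_coe_apply,
    ← Complex.exp_sum]
  push_cast
  rw [mul_sum]
  exact congrArg Complex.exp (sum_congr rfl fun j _ ↦ by ring)

lemma mFourier_sum (s : Finset τ) (f : τ → d → ℤ) (θ : UnitAddTorus d) :
    mFourier (∑ i ∈ s, f i) θ = ∏ i ∈ s, mFourier (f i) θ := by
  induction s using Finset.cons_induction with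
  | empty => simp [mFourier_zero]
  | cons a s ha ih => rw [sum_cons, prod_cons, mFourier_add, ih]

lemma mFourier_sub (m n : d → ℤ) (θ : UnitAddTorus d) :
    mFourier (m - n) θ = mFourier m θ * conj (mFourier n θ) := by
  rw [sub_eq_add_neg, mFourier_add, mFourier_neg]

lemma sum_mFourier_pow (S : Finset τ) (f : τ → d → ℤ) (θ : UnitAddTorus d) (s : ℕ) :
    (∑ x ∈ S, mFourier (f x) θ) ^ s =
      ∑ u ∈ Fintype.piFinset fun _ : Fin s ↦ S, mFourier (∑ i, f (u i)) θ := by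
  simp only [sum_pow', mFourier_sum]

lemma norm_sum_mFourier_pow_two_mul (S : Finset τ) (f : τ → d → ℤ) (θ : UnitAddTorus d) (s : ℕ) :
    (‖∑ x ∈ S, mFourier (f x) θ‖ ^ (2 * s) : ℂ) =
      ∑ p ∈ (Fintype.piFinset fun _ : Fin s ↦ S) ×ˢ (Fintype.piFinset fun _ : Fin s ↦ S),
        mFourier (∑ i, f (p.1 i) - ∑ i, f (p.2 i)) θ := by
  rw [pow_mul, ← Complex.mul_conj', mul_pow, ← map_pow, sum_mFourier_pow, map_sum, sum_mul_sum,
    ← sum_product']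
  simp only [mFourier_sub]

lemma univ_pi_Ico_ae_eq_setOf_forall_mem_Ioc (a b : d → ℝ) :
    (Set.univ.pi fun j ↦ Set.Ico (a j) (b j)) =ᵐ[volume] {x | ∀ j, x j ∈ Set.Ioc (a j) (b j)} := by
  have hIoc : {x : d → ℝ | ∀ j, x j ∈ Set.Ioc (a j) (b j)} =
      Set.univ.pi fun j ↦ Set.Ioc (a j) (b j) := by
    ext x
    simp
  rw [hIoc]
  exact Measure.univ_pi_Ico_ae_eq_Icc.trans Measure.univ_pi_Ioc_ae_eq_Icc.symm

lemma mFourierCoeff_mFourier (m n : d → ℤ) :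
    mFourierCoeff (mFourier m) n = if n = m then 1 else 0 := by
  classical
  rw [← mFourierCoeff_toLp, ← mFourierBasis_repr]
  change mFourierBasis.repr (mFourierLp 2 m) n = _
  rw [← coe_mFourierBasis, HilbertBasis.repr_self, lp.single_apply, Pi.single_apply]

lemma setIntegral_mFourier (t : d → ℤ) :
    ∫ α in Set.univ.pi fun _ : d ↦ Set.Ico (0 : ℝ) 1, mFourier t (torusPoint α) =
      if t = 0 then 1 else 0 := by
  have hcoeff := mFourierCoeff_eq_integral (mFourier (0 : d → ℤ)) (-t) 0
  rw [mFourierCoeff_mFourier] at hcoeff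
  simp only [neg_eq_zero, neg_neg, Pi.zero_apply, zero_add, mFourier_zero,
    ContinuousMap.one_apply, smul_eq_mul, mul_one] at hcoeff
  rw [setIntegral_congr_set (univ_pi_Ico_ae_eq_setOf_forall_mem_Ioc (fun _ ↦ 0) fun _ ↦ 1)]
  exact hcoeff.symm

lemma integrableOn_mFourier (t : d → ℤ) :
    IntegrableOn (fun α ↦ mFourier t (torusPoint α))
      (Set.univ.pi fun _ : d ↦ Set.Ico (0 : ℝ) 1) := by
  have hcont : Continuous fun α ↦ mFourier t (torusPoint α) :=
    (mFourier t).continuous.comp continuous_torusPoint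
  exact (hcont.continuousOn.integrableOn_compact
    (isCompact_univ_pi fun _ ↦ isCompact_Icc)).mono_set
      (Set.pi_mono fun _ _ ↦ Set.Ico_subset_Icc_self)

lemma setIntegral_sum_mFourier (S : Finset τ) (f : τ → d → ℤ) :
    ∫ α in Set.univ.pi fun _ : d ↦ Set.Ico (0 : ℝ) 1, ∑ p ∈ S, mFourier (f p) (torusPoint α) =
      #{p ∈ S | f p = 0} := by
  rw [integral_finsetSum _ fun p _ ↦ integrableOn_mFourier (f p)]
  simp only [setIntegral_mFourier, sum_boole]

end TrigonometricSums

section PowerSums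

variable {ι R : Type*}

lemma sum_add_pow_sub_sum_add_pow [CommRing R] (s : Finset ι) (x y : ι → R) (z : R) (n : ℕ) :
    ∑ i ∈ s, (x i + z) ^ n - ∑ i ∈ s, (y i + z) ^ n =
      ∑ m ∈ range (n + 1), n.choose m * (∑ i ∈ s, x i ^ m - ∑ i ∈ s, y i ^ m) * z ^ (n - m) := by
  simp only [add_pow, ← sum_sub_distrib, mul_sum, sum_mul]
  rw [sum_comm]
  exact sum_congr rfl fun m _ ↦ sum_congr rfl fun i _ ↦ by ring

lemma sum_add_pow_sub_sum_add_pow_of_forall_ne [CommRing R] {s : Finset ι} {x y : ι → R}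
    {n r : ℕ} (hxy : ∀ m ∈ Icc 1 n, m ≠ r → ∑ i ∈ s, x i ^ m = ∑ i ∈ s, y i ^ m) (z : R) :
    ∑ i ∈ s, (x i + z) ^ n - ∑ i ∈ s, (y i + z) ^ n =
      n.choose r * (∑ i ∈ s, x i ^ r - ∑ i ∈ s, y i ^ r) * z ^ (n - r) := by
  rw [sum_add_pow_sub_sum_add_pow]
  refine sum_eq_single r (fun m hm hmr ↦ ?_) fun hr ↦ ?_
  · have heq : ∑ i ∈ s, x i ^ m = ∑ i ∈ s, y i ^ m := by
      rcases m.eq_zero_or_pos with rfl | hpos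
      · simp
      · exact hxy m (mem_Icc.mpr ⟨hpos, Nat.lt_succ_iff.mp (mem_range.mp hm)⟩) hmr
    rw [heq, sub_self, mul_zero, zero_mul]
  · rw [Nat.choose_eq_zero_of_lt (by simpa using hr), Nat.cast_zero, zero_mul, zero_mul]

lemma abs_sum_pow_sub_sum_pow_le [CommRing R] [LinearOrder R] [IsStrictOrderedRing R]
    {s : Finset ι} {x y : ι → R} {B : R} (hx : ∀ i ∈ s, x i ∈ Set.Icc 0 B)
    (hy : ∀ i ∈ s, y i ∈ Set.Icc 0 B) (r : ℕ) :
    |∑ i ∈ s, x i ^ r - ∑ i ∈ s, y i ^ r| ≤ #s * B ^ r := by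
  have hsum : ∀ w : ι → R, (∀ i ∈ s, w i ∈ Set.Icc 0 B) →
      0 ≤ ∑ i ∈ s, w i ^ r ∧ ∑ i ∈ s, w i ^ r ≤ #s * B ^ r := fun w hw ↦
    ⟨sum_nonneg fun i hi ↦ pow_nonneg (hw i hi).1 r, by
      rw [← nsmul_eq_mul]
      exact sum_le_card_nsmul _ _ _ fun i hi ↦ pow_le_pow_left₀ (hw i hi).1 (hw i hi).2 r⟩
  exact abs_sub_le_of_nonneg_of_le (hsum x hx).1 (hsum x hx).2 (hsum y hy).1 (hsum y hy).2

end PowerSums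

/-- The integer points of the box `[1, Y]^s`, which index the terms of `weylSum k α Y ^ s`. -/
noncomputable def intBox (s : ℕ) (Y : ℝ) : Finset (Fin s → ℤ) :=
  Fintype.piFinset fun _ ↦ Icc 1 ⌊Y⌋

lemma mem_intBox {s : ℕ} {Y : ℝ} {x : Fin s → ℤ} :
    x ∈ intBox s Y ↔ ∀ i, 1 ≤ x i ∧ (x i : ℝ) ≤ Y := by
  simp only [intBox, Fintype.mem_piFinset, mem_Icc, Int.le_floor]

/-- The point `(x, x², …, x^k)` of the moment curve, indexed like `α` in `weylSum`. -/
def momentVector (k : ℕ) (x : ℤ) : Fin k → ℤ := fun j ↦ x ^ ((j : ℕ) + 1)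

/-- The frequency of the `(h, z)` term of `gSum`. Its entries with `j < r` vanish because the
binomial coefficient does. -/
def shiftVector (k r : ℕ) (h z : ℤ) : Fin k → ℤ := fun j ↦
  ((j : ℕ) + 1).choose r * h * z ^ ((j : ℕ) + 1 - r)

lemma weylSum_eq_sum_mFourier (k : ℕ) (α : Fin k → ℝ) (Y : ℝ) :
    weylSum k α Y =
      ∑ x ∈ Icc (1 : ℤ) ⌊Y⌋, UnitAddTorus.mFourier (momentVector k x) (torusPoint α) := by
  simp only [weylSum, ← eTheta_sum_mul_intCast, momentVector, Int.cast_pow]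

/-- The index set of the double sum `gSum`. -/
noncomputable def shiftRange (s r : ℕ) (X : ℝ) : Finset (ℤ × ℤ) :=
  Icc (-⌊s * X ^ r⌋) ⌊s * X ^ r⌋ ×ˢ Icc 1 ⌊X⌋

lemma gSum_neg_eq_sum_mFourier (s k r : ℕ) (α : Fin k → ℝ) (X : ℝ) :
    gSum s k r (-α) X =
      ∑ q ∈ shiftRange s r X,
        UnitAddTorus.mFourier (-shiftVector k r q.1 q.2) (torusPoint α) := by
  rw [gSum, ← sum_product', shiftRange]
  refine sum_congr rfl fun q _ ↦ ?_
  rw [← eTheta_sum_mul_intCast]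
  refine congrArg eTheta (sum_congr rfl fun j _ ↦ ?_)
  have hchoose : (if r ≤ (j : ℕ) + 1 then (((j : ℕ) + 1).choose r : ℝ) else 0) =
      ((j : ℕ) + 1).choose r :=
    ite_eq_left_iff.mpr fun h ↦ by rw [Nat.choose_eq_zero_of_lt (not_le.mp h), Nat.cast_zero]
  simp only [hchoose, shiftVector, Pi.neg_apply, Int.cast_neg, Int.cast_mul, Int.cast_pow,
    Int.cast_natCast]
  ring

/-- The pairs counted by `vinogradovSliceCount`, as a finset. -/
noncomputable def sliceSolutions (s k r : ℕ) (X : ℝ) : Finset ((Fin s → ℤ) × (Fin s → ℤ)) :=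
  {p ∈ intBox s X ×ˢ intBox s X |
    ∀ j ∈ Icc 1 k, j ≠ r → ∑ i, p.1 i ^ j = ∑ i, p.2 i ^ j}

/-- The solutions `((u, v), (h, z))` of `∑ uᵢ^j - ∑ vᵢ^j = C(j, r) h z^(j - r)`, `1 ≤ j ≤ k`,
with the `uᵢ, vᵢ` in `[1, 2X]`; the integral of `|h_k(α; 2X)|^(2s) g_r(-α; X)` counts them. -/
noncomputable def shiftedSolutions (s k r : ℕ) (X : ℝ) :
    Finset (((Fin s → ℤ) × (Fin s → ℤ)) × (ℤ × ℤ)) :=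
  {p ∈ (intBox s (2 * X) ×ˢ intBox s (2 * X)) ×ˢ shiftRange s r X |
    ∑ i, momentVector k (p.1.1 i) - ∑ i, momentVector k (p.1.2 i) -
      shiftVector k r p.2.1 p.2.2 = 0}

lemma vinogradovSliceCount_eq_card (s k r : ℕ) (X : ℝ) :
    vinogradovSliceCount s k r X = #(sliceSolutions s k r X) := by
  rw [vinogradovSliceCount, ← Set.ncard_coe_finset]
  congr 1
  ext p
  simp only [sliceSolutions, Set.mem_ofPred_eq, coe_filter, mem_product, mem_intBox, and_assoc]

lemma setIntegral_weylSum_mul_gSum_eq_card (s k r : ℕ) (X : ℝ) :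
    ∫ α in Set.univ.pi fun _ : Fin k ↦ Set.Ico (0 : ℝ) 1,
      (‖weylSum k α (2 * X)‖ ^ (2 * s) : ℂ) * gSum s k r (-α) X =
    #(shiftedSolutions s k r X) := by
  rw [shiftedSolutions, ← setIntegral_sum_mFourier]
  refine congrArg (integral _) (funext fun α ↦ ?_)
  rw [weylSum_eq_sum_mFourier, norm_sum_mFourier_pow_two_mul, gSum_neg_eq_sum_mFourier,
    sum_mul_sum, ← sum_product']
  simp only [← UnitAddTorus.mFourier_add, ← sub_eq_add_neg, intBox]

/-- The simultaneous translation of a pair `(x, y)` by `z`, recording the defect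
in the `r`-th equation. -/
def translateSolution (s r : ℕ) (q : ((Fin s → ℤ) × (Fin s → ℤ)) × ℤ) :
    ((Fin s → ℤ) × (Fin s → ℤ)) × (ℤ × ℤ) :=
  ((fun i ↦ q.1.1 i + q.2, fun i ↦ q.1.2 i + q.2), (∑ i, q.1.1 i ^ r - ∑ i, q.1.2 i ^ r, q.2))

lemma translateSolution_injective (s r : ℕ) : Function.Injective (translateSolution s r) := by
  rintro ⟨⟨x, y⟩, z⟩ ⟨⟨x', y'⟩, z'⟩ h
  simp only [translateSolution, Prod.mk.injEq] at h
  obtain ⟨⟨hx, hy⟩, -, rfl⟩ := h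
  simp only [funext_iff, add_left_inj] at hx hy
  rw [funext hx, funext hy]

lemma add_mem_intBox {s : ℕ} {X Y : ℝ} {x : Fin s → ℤ} {z : ℤ} (hx : x ∈ intBox s X)
    (hz : z ∈ Icc 1 ⌊Y⌋) : (fun i ↦ x i + z) ∈ intBox s (X + Y) := by
  simp only [mem_intBox, mem_Icc, Int.le_floor] at hx hz ⊢
  intro i
  refine ⟨by linarith [(hx i).1, hz.1], ?_⟩
  push_cast
  exact add_le_add (hx i).2 hz.2

lemma sum_pow_sub_sum_pow_mem_Icc {s : ℕ} {X : ℝ} {x y : Fin s → ℤ} (hx : x ∈ intBox s X)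
    (hy : y ∈ intBox s X) (r : ℕ) :
    ∑ i, x i ^ r - ∑ i, y i ^ r ∈ Icc (-⌊s * X ^ r⌋) ⌊s * X ^ r⌋ := by
  have hcast : ∀ w ∈ intBox s X, ∀ i ∈ univ, (w i : ℝ) ∈ Set.Icc 0 X := fun w hw i _ ↦
    ⟨Int.cast_nonneg (zero_le_one.trans (mem_intBox.mp hw i).1), (mem_intBox.mp hw i).2⟩
  rw [mem_Icc, ← abs_le, Int.le_floor]
  push_cast
  simpa only [card_univ, Fintype.card_fin] using
    abs_sum_pow_sub_sum_pow_le (hcast x hx) (hcast y hy) r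

lemma translateSolution_mem_shiftedSolutions {s k r : ℕ} {X : ℝ}
    {q : ((Fin s → ℤ) × (Fin s → ℤ)) × ℤ} (hq : q ∈ sliceSolutions s k r X ×ˢ Icc 1 ⌊X⌋) :
    translateSolution s r q ∈ shiftedSolutions s k r X := by
  obtain ⟨hp, hz⟩ := mem_product.mp hq
  obtain ⟨hbox, hslice⟩ := mem_filter.mp hp
  obtain ⟨hx, hy⟩ := mem_product.mp hbox
  refine mem_filter.mpr ⟨?_, ?_⟩
  · rw [two_mul]
    exact mem_product.mpr ⟨mem_product.mpr ⟨add_mem_intBox hx hz, add_mem_intBox hy hz⟩,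
      mem_product.mpr ⟨sum_pow_sub_sum_pow_mem_Icc hx hy r, hz⟩⟩
  · funext j
    have hle : Icc 1 ((j : ℕ) + 1) ⊆ Icc 1 k := Icc_subset_Icc_right j.isLt
    simp only [Pi.sub_apply, Finset.sum_apply, momentVector, shiftVector, translateSolution,
      Pi.zero_apply, sub_eq_zero]
    exact sum_add_pow_sub_sum_add_pow_of_forall_ne (fun m hm ↦ hslice m (hle hm)) q.2

lemma card_sliceSolutions_mul_floor_le (s k r : ℕ) (X : ℝ) :
    #(sliceSolutions s k r X) * ⌊X⌋₊ ≤ #(shiftedSolutions s k r X) := by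
  calc #(sliceSolutions s k r X) * ⌊X⌋₊ = #(sliceSolutions s k r X ×ˢ Icc 1 ⌊X⌋) := by
        rw [card_product, Int.card_Icc, add_sub_cancel_right, Int.floor_toNat]
    _ ≤ #(shiftedSolutions s k r X) :=
        card_le_card_of_injOn _ (fun _ ↦ translateSolution_mem_shiftedSolutions)
          (translateSolution_injective s r).injOn

theorem count_le_integral_bound_general (s k r : ℕ) {X : ℝ} (hX : 1 ≤ X) :
    (vinogradovSliceCount s k r X : ℝ) ≤
      2 * X⁻¹ *
        (∫ α in (Set.univ.pi fun _ : Fin k => Set.Ico (0 : ℝ) 1),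
          (‖weylSum k α (2 * X)‖ ^ (2 * s) : ℂ) * gSum s k r (-α) X).re := by
  rw [setIntegral_weylSum_mul_gSum_eq_card, Complex.natCast_re, vinogradovSliceCount_eq_card]
  have hfloor : X / 2 ≤ ⌊X⌋₊ := (Nat.div_two_lt_floor hX).le
  calc (#(sliceSolutions s k r X) : ℝ)
      = 2 * X⁻¹ * (#(sliceSolutions s k r X) * (X / 2)) := by field_simp
    _ ≤ 2 * X⁻¹ * (#(sliceSolutions s k r X) * ⌊X⌋₊) := by gcongr
    _ ≤ 2 * X⁻¹ * #(shiftedSolutions s k r X) := by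
        gcongr
        exact_mod_cast card_sliceSolutions_mul_floor_le s k r X

theorem count_le_integral_bound
    (s k r : ℕ) (hs : 1 ≤ s) (hr : 1 ≤ r) (hrk : r < k) :
    ∃ C X₀ : ℝ, ∀ X : ℝ, X₀ ≤ X →
      (vinogradovSliceCount s k r X : ℝ) ≤
        C * X⁻¹ *
          (∫ α in (Set.univ.pi fun _ : Fin k => Set.Ico (0 : ℝ) 1),
            (‖weylSum k α (2 * X)‖ ^ (2 * s) : ℂ) * gSum s k r (-α) X).re :=
  ⟨2, 1, fun _ hX ↦ count_le_integral_bound_general s k r hX⟩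
end
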